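/- For every minimally unsatisfiable generalised clause-set F with δ(F) = 1 and n(F) > 0 there exists a variable v ∈ var(F) such that #_{(v,ε)}(F) = 1 for every ε ∈ D_v, i.e., every value of v occurs in exactly one clause of F. -/

import Mathlib

open scoped Classical

namespace GCLS

variable {V α : Type} [DecidableEq V] [DecidableEq α]

/-- A finite "functional" set of (variable, value) pairs, with values inside the
given domains `D`; used both for clauses and for partial assignments. -/
def FinFn (D : V → Finset α) : Type :=
  { s : Finset (V × α) // (∀ p ∈ s, p.2 ∈ D p.1) ∧
      ∀ p ∈ s, ∀ q ∈ s, p.1 = q.1 → p = q }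

variable {D : V → Finset α}

instance : DecidableEq (FinFn D) :=
  fun a b => decidable_of_iff (a.1 = b.1) Subtype.ext_iff.symm

namespace FinFn

/-- The set of variables occurring. -/
def vars (s : FinFn D) : Finset V := s.1.image Prod.fst

/-- Restriction to the pairs whose variable lies in `W`. -/
def restrictVars (s : FinFn D) (W : Finset V) : FinFn D :=
  ⟨s.1.filter (fun p => p.1 ∈ W),
   fun p hp => s.2.1 p (Finset.mem_filter.mp hp).1,
   fun p hp q hq h =>
     s.2.2 p (Finset.mem_filter.mp hp).1 q (Finset.mem_filter.mp hq).1 h⟩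

/-- Removal of a set of pairs. -/
def sdiff (s : FinFn D) (t : Finset (V × α)) : FinFn D :=
  ⟨s.1 \ t,
   fun p hp => s.2.1 p (Finset.mem_sdiff.mp hp).1,
   fun p hp q hq h =>
     s.2.2 p (Finset.mem_sdiff.mp hp).1 q (Finset.mem_sdiff.mp hq).1 h⟩

end FinFn

/-- Clauses: finite sets of literals `(v,ε)` (meaning "v ≠ ε"), at most one literal
per variable, values inside the domains. -/
abbrev Clause (D : V → Finset α) := FinFn D

/-- Partial assignments: finitely many variables get values inside their domains. -/
abbrev PAssign (D : V → Finset α) := FinFn D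

/-- `φ` satisfies the literal `(v,ε)` (i.e. "v ≠ ε"): `v` is assigned a value ≠ `ε`. -/
def SatLit (φ : PAssign D) (l : V × α) : Prop :=
  ∃ ε, (l.1, ε) ∈ φ.1 ∧ ε ≠ l.2

/-- `φ` satisfies a clause iff it satisfies some literal of it. -/
def SatClause (φ : PAssign D) (C : Clause D) : Prop :=
  ∃ l ∈ C.1, SatLit φ l

/-- The clause obtained from `C` by deleting all literals falsified by `φ`. -/
def Clause.restrict (φ : PAssign D) (C : Clause D) : Clause D :=
  FinFn.sdiff C φ.1

/-- The operation `φ * F` on multi-clause-sets: remove all clauses satisfied by `φ`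
and delete all falsified literals from the remaining clauses. -/
noncomputable def applyM (φ : PAssign D) (F : Multiset (Clause D)) : Multiset (Clause D) :=
  (F.filter (fun C => ¬ SatClause φ C)).map (Clause.restrict φ)

/-- The operation `φ * F` on clause-sets (with contraction of equal clauses). -/
noncomputable def applyF (φ : PAssign D) (F : Finset (Clause D)) : Finset (Clause D) :=
  (F.filter (fun C => ¬ SatClause φ C)).image (Clause.restrict φ)

/-- Satisfiability: some partial assignment satisfies all clauses. -/
def Sat (F : Multiset (Clause D)) : Prop :=
  ∃ φ : PAssign D, applyM φ F = 0

/-- Minimal unsatisfiability of a clause-set. -/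
def MinUnsat (F : Finset (Clause D)) : Prop :=
  ¬ Sat F.val ∧ ∀ F' ⊂ F, Sat F'.val

/-- The variables of a multi-clause-set. -/
def mvars (F : Multiset (Clause D)) : Finset V := F.toFinset.sup FinFn.vars

/-- The deficiency `δ(F) = c(F) - Σ_{v ∈ var(F)} (|D_v| - 1)`. -/
def delta (F : Multiset (Clause D)) : ℤ :=
  (Multiset.card F : ℤ) - ∑ v ∈ mvars F, ((D v).card - 1 : ℤ)

lemma powerset_toFinset_nonempty (F : Multiset (Clause D)) :
    F.powerset.toFinset.Nonempty :=
  ⟨0, by simp⟩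

/-- The maximal deficiency `δ*(F) = max {δ(F') : F' ≤ F}`. -/
noncomputable def deltaStar (F : Multiset (Clause D)) : ℤ :=
  F.powerset.toFinset.sup' (powerset_toFinset_nonempty F) delta

/-- A tight sub-multi-clause-set: `F' ≤ F` with `δ(F') = δ*(F)`. -/
noncomputable def Tight (F F' : Multiset (Clause D)) : Prop :=
  F' ≤ F ∧ delta F' = deltaStar F

/-- `F` is matching satisfiable: the clause-variable graph `B(F)` has a matching
covering all clause-nodes.  Such a matching is encoded as a multiset `P` of pairs
(clause-occurrence, variable-node), where the variable-nodes `(v,k)`,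
`k < |D v| - 1`, are the copies of the variable `v`; the matching covers each
clause-occurrence exactly once (`P.map Prod.fst = F`), uses pairwise distinct
variable-nodes, and respects adjacency in `B(F)`. -/
def MatchingSat (F : Multiset (Clause D)) : Prop :=
  ∃ P : Multiset (Clause D × (V × ℕ)),
    P.map Prod.fst = F ∧ (P.map Prod.snd).Nodup ∧
    ∀ p ∈ P, p.2.1 ∈ FinFn.vars p.1 ∧ p.2.2 < (D p.2.1).card - 1

/-- The edge between clause `C` and the copies of variable `v` is retained in
`B_φ(F)`: the literal of `C` with variable `v` is satisfied by `φ`. -/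
def EdgeSat (φ : PAssign D) (C : Clause D) (v : V) : Prop :=
  ∃ ε, (v, ε) ∈ C.1 ∧ SatLit φ (v, ε)

/-- `φ` is matching-satisfying for `F`: `B_φ(F)` has a matching covering all
clause-nodes. -/
def MatchingSatisfying (φ : PAssign D) (F : Multiset (Clause D)) : Prop :=
  ∃ P : Multiset (Clause D × (V × ℕ)),
    P.map Prod.fst = F ∧ (P.map Prod.snd).Nodup ∧
    ∀ p ∈ P, p.2.2 < (D p.2.1).card - 1 ∧ EdgeSat φ p.1 p.2.1

/-- The maximum size of a matching in `B(F)`. -/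
noncomputable def nu (F : Multiset (Clause D)) : ℕ :=
  sSup { k | ∃ P : Multiset (Clause D × (V × ℕ)),
    P.map Prod.fst ≤ F ∧ (P.map Prod.snd).Nodup ∧
    (∀ p ∈ P, p.2.1 ∈ FinFn.vars p.1 ∧ p.2.2 < (D p.2.1).card - 1) ∧
    Multiset.card P = k }

/-- The maximum size of a matching in `B_φ(F)`. -/
noncomputable def nuSub (φ : PAssign D) (F : Multiset (Clause D)) : ℕ :=
  sSup { k | ∃ P : Multiset (Clause D × (V × ℕ)),
    P.map Prod.fst ≤ F ∧ (P.map Prod.snd).Nodup ∧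
    (∀ p ∈ P, p.2.2 < (D p.2.1).card - 1 ∧ EdgeSat φ p.1 p.2.1) ∧
    Multiset.card P = k }

/-- `φ` is matching-maximum for `F`. -/
noncomputable def MatchingMaximum (φ : PAssign D) (F : Multiset (Clause D)) : Prop :=
  nuSub φ F = nu F

/-- `φ` is an autarky for `F`: every clause touched by `φ` is satisfied by `φ`. -/
def IsAutarky (φ : PAssign D) (F : Multiset (Clause D)) : Prop :=
  ∀ C ∈ F, (FinFn.vars C ∩ FinFn.vars φ).Nonempty → SatClause φ C

/-- `F` is lean: it has no non-trivial autarky. -/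
def IsLean (F : Multiset (Clause D)) : Prop :=
  ¬ ∃ φ : PAssign D, IsAutarky φ F ∧ (FinFn.vars φ ∩ mvars F).Nonempty

/-- The sub-multi-clause-set of clauses touched by the variables in `W`. -/
noncomputable def touchedBy (F : Multiset (Clause D)) (W : Finset V) : Multiset (Clause D) :=
  F.filter (fun C => (FinFn.vars C ∩ W).Nonempty)

/-- The restriction `F[W]`: keep the clauses touching `W` and delete from them all
literals whose variable is not in `W`. -/
noncomputable def restrictTo (F : Multiset (Clause D)) (W : Finset V) : Multiset (Clause D) :=
  (touchedBy F W).map (fun C => FinFn.restrictVars C W)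

/-- `φ` is a matching autarky for `F`: `φ` is matching-satisfying for the
sub-multi-clause-set of clauses touched by `φ`. -/
noncomputable def IsMatchingAutarky (φ : PAssign D) (F : Multiset (Clause D)) : Prop :=
  MatchingSatisfying φ (touchedBy F (FinFn.vars φ))

/-- `F` is matching lean: no non-trivial matching autarky. -/
noncomputable def MatchingLean (F : Multiset (Clause D)) : Prop :=
  ¬ ∃ φ : PAssign D, IsMatchingAutarky φ F ∧ (FinFn.vars φ ∩ mvars F).Nonempty

lemma surp_nonempty {F : Multiset (Clause D)} (h : (mvars F).Nonempty) :
    ((mvars F).powerset.erase ∅).Nonempty := by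
  obtain ⟨v, hv⟩ := h
  refine ⟨{v}, ?_⟩
  simp [Finset.mem_erase, Finset.singleton_subset_iff, hv]

/-- The surplus `surp(F) = min {δ(F[W]) : ∅ ≠ W ⊆ var(F)}` (and `0` if `var(F) = ∅`). -/
noncomputable def surp (F : Multiset (Clause D)) : ℤ :=
  if h : (mvars F).Nonempty then
    ((mvars F).powerset.erase ∅).inf' (surp_nonempty h)
      (fun W => delta (restrictTo F W))
  else 0

/-- The number of occurrences of the literal `l` in `F`. -/
noncomputable def litCount (F : Multiset (Clause D)) (l : V × α) : ℕ :=
  Multiset.card (F.filter (fun C => l ∈ C.1))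

/-- The number of occurrences `#_v(F)` of the variable `v` in `F`. -/
noncomputable def varCount (F : Multiset (Clause D)) (v : V) : ℕ :=
  ∑ ε ∈ D v, litCount F (v, ε)

/-- The partial assignment `⟨v → ε⟩`. -/
def single (v : V) (ε : α) (hε : ε ∈ D v) : PAssign D :=
  ⟨{(v, ε)}, by
    refine ⟨?_, ?_⟩
    · intro p hp
      rw [Finset.mem_singleton] at hp
      subst hp; exact hε
    · intro p hp q hq _
      rw [Finset.mem_singleton] at hp hq
      subst hp; subst hq; rfl⟩

/-- Composition `φ ∘ ψ` of partial assignments: domain is the union of the domains,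
`ψ` taking precedence. -/
def comp (φ ψ : PAssign D) : PAssign D :=
  ⟨ψ.1 ∪ φ.1.filter (fun p => p.1 ∉ FinFn.vars ψ), by
    constructor
    · intro p hp
      rcases Finset.mem_union.mp hp with h | h
      · exact ψ.2.1 p h
      · exact φ.2.1 p (Finset.mem_filter.mp h).1
    · intro p hp q hq hpq
      rcases Finset.mem_union.mp hp with h1 | h1 <;>
        rcases Finset.mem_union.mp hq with h2 | h2
      · exact ψ.2.2 p h1 q h2 hpq
      · exact absurd (hpq ▸ Finset.mem_image_of_mem Prod.fst h1)
          (Finset.mem_filter.mp h2).2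
      · exact absurd (hpq.symm ▸ Finset.mem_image_of_mem Prod.fst h2)
          (Finset.mem_filter.mp h1).2
      · exact φ.2.2 p (Finset.mem_filter.mp h1).1 q (Finset.mem_filter.mp h2).1 hpq⟩

/-- Two clauses clash (in some variable). -/
def Clash (C C' : Clause D) : Prop :=
  ∃ v ε ε', (v, ε) ∈ C.1 ∧ (v, ε') ∈ C'.1 ∧ ε ≠ ε'

/-- The number of variables in which two clauses clash. -/
noncomputable def clashCount (C C' : Clause D) : ℕ :=
  ((FinFn.vars C).filter
    (fun v => ∃ ε ε', (v, ε) ∈ C.1 ∧ (v, ε') ∈ C'.1 ∧ ε ≠ ε')).card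

/-- Hitting clause-sets: every two distinct clauses clash. -/
def Hitting (F : Finset (Clause D)) : Prop :=
  ∀ C ∈ F, ∀ C' ∈ F, C ≠ C' → Clash C C'

/-- Boolean clauses over the boolean variables `V × α` (one boolean variable per
generalised literal; the value `false` gives the positive boolean literal). -/
abbrev BClause (V α : Type) :=
  Clause (fun _ : V × α => (Finset.univ : Finset Bool))

/-- The direct translation of a single clause: each literal `(v,ε)` is replaced by
the positive boolean literal of the boolean variable `(v,ε)`. -/
def dirClause (C : Clause D) : BClause V α :=
  ⟨C.1.image (fun p => (p, false)), by
    constructor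
    · intro p _; exact Finset.mem_univ _
    · intro p hp q hq h
      simp only [Finset.mem_image] at hp hq
      obtain ⟨a, -, rfl⟩ := hp
      obtain ⟨b, -, rfl⟩ := hq
      exact congrArg (fun x => (x, false)) h⟩

/-- The ALO-clause for a variable `v`: the negative boolean literals of the boolean
variables `(v,ε)` for `ε ∈ D v`. -/
def aloClause (D : V → Finset α) (v : V) : BClause V α :=
  ⟨(D v).image (fun ε => ((v, ε), true)), by
    constructor
    · intro p _; exact Finset.mem_univ _
    · intro p hp q hq h
      simp only [Finset.mem_image] at hp hq
      obtain ⟨a, -, rfl⟩ := hp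
      obtain ⟨b, -, rfl⟩ := hq
      exact congrArg (fun x => (x, true)) h⟩

/-- The direct translation `Γ(F)`: the translated clauses together with the
ALO-clauses for all occurring variables. -/
noncomputable def dirTrans (F : Finset (Clause D)) : Finset (BClause V α) :=
  F.image dirClause ∪ (mvars F.val).image (aloClause D)

/-!
A minimally unsatisfiable clause-set is lean: an autarky could be composed with an assignment
satisfying the untouched clauses.  For a lean `F` of deficiency one, choose a minimal non-empty set
`W` of variables touching at most `∑ v ∈ W, (|D v| - 1) + 1` clauses.  Every `v ∈ W` is singular.
Each value of `v` occurs, since otherwise assigning it to `v` would be an autarky.  If `|D v| = 1`,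
minimality forces `W = {v}`, so only one clause contains `v`.  If `|D v| ≥ 2` and the literal
`(v, ε)` occurred twice, forbid the value `ε` for `v`: this satisfies two of the clauses touched by
`W` and lowers the capacity `∑ v ∈ W, (|D v| - 1)` by one.  By minimality of `W`, Hall's condition
holds for the remaining touched clauses, so they can be distributed among the variables of `W` with
each `v` responsible for fewer clauses than it has values left.  Giving each variable a value that
satisfies all clauses it is responsible for yields an autarky with domain `W`.
-/

section Basic

omit [DecidableEq α] in
lemma mem_vars {C : Clause D} {v : V} : v ∈ FinFn.vars C ↔ ∃ ε, (v, ε) ∈ C.1 := by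
  simp [FinFn.vars]

lemma mem_mvars {F : Multiset (Clause D)} {v : V} :
    v ∈ mvars F ↔ ∃ C ∈ F, v ∈ FinFn.vars C := by
  simp [mvars, Finset.mem_sup]

lemma domain_nonempty_of_mem_mvars {F : Multiset (Clause D)} {v : V} (hv : v ∈ mvars F) :
    (D v).Nonempty := by
  obtain ⟨C, -, hvC⟩ := mem_mvars.mp hv
  obtain ⟨ε, hε⟩ := mem_vars.mp hvC
  exact ⟨ε, C.2.1 _ hε⟩

lemma sat_iff {F : Multiset (Clause D)} :
    Sat F ↔ ∃ φ : PAssign D, ∀ C ∈ F, SatClause φ C := by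
  simp [Sat, applyM, Multiset.filter_eq_nil]

omit [DecidableEq V] [DecidableEq α] in
lemma SatClause.mono {φ ψ : PAssign D} {C : Clause D} (h : φ.1 ⊆ ψ.1) (hC : SatClause φ C) :
    SatClause ψ C := by
  obtain ⟨l, hl, ε, hε, hne⟩ := hC
  exact ⟨l, hl, ε, h hε, hne⟩

omit [DecidableEq α] in
lemma mem_touchedBy {F : Multiset (Clause D)} {W : Finset V} {C : Clause D} :
    C ∈ touchedBy F W ↔ C ∈ F ∧ (FinFn.vars C ∩ W).Nonempty :=
  Multiset.mem_filter

omit [DecidableEq α] in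
lemma touchedBy_mono (F : Multiset (Clause D)) {U W : Finset V} (h : U ⊆ W) :
    touchedBy F U ≤ touchedBy F W :=
  Multiset.monotone_filter_right F fun _ hC => hC.mono (Finset.inter_subset_inter_left h)

lemma litCount_touchedBy (F : Multiset (Clause D)) {W : Finset V} {v : V} (hv : v ∈ W) (ε : α) :
    litCount (touchedBy F W) (v, ε) = litCount F (v, ε) := by
  unfold litCount touchedBy
  rw [Multiset.filter_filter]
  congr 1
  refine Multiset.filter_congr fun C _ => and_iff_left_of_imp fun hl => ?_
  exact ⟨v, Finset.mem_inter.mpr ⟨mem_vars.mpr ⟨ε, hl⟩, hv⟩⟩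

end Basic

section Autarky

lemma IsAutarky.satClause_comp {F : Multiset (Clause D)} {φ ψ : PAssign D} (hφ : IsAutarky φ F)
    (hψ : ∀ C ∈ F, ¬ (FinFn.vars C ∩ FinFn.vars φ).Nonempty → SatClause ψ C) :
    ∀ C ∈ F, SatClause (comp ψ φ) C := by
  intro C hC
  by_cases htouched : (FinFn.vars C ∩ FinFn.vars φ).Nonempty
  · exact (hφ C hC htouched).mono Finset.subset_union_left
  · obtain ⟨l, hl, ε, hε, hne⟩ := hψ C hC htouched
    have hlφ : l.1 ∉ FinFn.vars φ := fun h =>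
      htouched ⟨l.1, Finset.mem_inter.mpr ⟨mem_vars.mpr ⟨l.2, hl⟩, h⟩⟩
    exact ⟨l, hl, ε, Finset.mem_union_right _ (Finset.mem_filter.mpr ⟨hε, hlφ⟩), hne⟩

theorem MinUnsat.isLean {F : Finset (Clause D)} (hF : MinUnsat F) : IsLean F.val := by
  rintro ⟨φ, hφ, v, hv⟩
  obtain ⟨hvφ, hvF⟩ := Finset.mem_inter.mp hv
  obtain ⟨C, hC, hvC⟩ := mem_mvars.mp hvF
  have huntouched : {C ∈ F | ¬ (FinFn.vars C ∩ FinFn.vars φ).Nonempty} ⊂ F :=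
    Finset.filter_ssubset.mpr ⟨C, hC, not_not.mpr ⟨v, Finset.mem_inter.mpr ⟨hvC, hvφ⟩⟩⟩
  obtain ⟨ψ, hψ⟩ := sat_iff.mp (hF.2 _ huntouched)
  exact hF.1 <| sat_iff.mpr
    ⟨comp ψ φ, hφ.satClause_comp fun C hC h => hψ C (Finset.mem_filter.mpr ⟨hC, h⟩)⟩

lemma IsLean.litCount_pos {F : Multiset (Clause D)} (hF : IsLean F) {v : V} (hv : v ∈ mvars F)
    {ε : α} (hε : ε ∈ D v) : 0 < litCount F (v, ε) := by
  by_contra hzero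
  have hnone : ∀ C ∈ F, (v, ε) ∉ C.1 := by
    simpa [litCount, Multiset.filter_eq_nil] using hzero
  have hvars : FinFn.vars (single v ε hε) = {v} := Finset.image_singleton ..
  refine hF ⟨single v ε hε, fun C hC htouched => ?_, v, by simp [hvars, hv]⟩
  have hvC : v ∈ FinFn.vars C := by simpa [hvars, Finset.Nonempty] using htouched
  obtain ⟨ε', hε'⟩ := mem_vars.mp hvC
  refine ⟨_, hε', ε, Finset.mem_singleton_self _, ?_⟩
  rintro rfl
  exact hnone C hC hε'

end Autarky

section Hall

theorem exists_choice_card_fiber_le_of_hall {ι β : Type*} [Fintype ι] [DecidableEq β]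
    (t : ι → Finset β) (k : β → ℕ) (hall : ∀ s : Finset ι, s.card ≤ ∑ b ∈ s.biUnion t, k b) :
    ∃ m : ι → β, (∀ i, m i ∈ t i) ∧ ∀ b, (Finset.univ.filter fun i => m i = b).card ≤ k b := by
  -- Replace each `b` by `k b` copies and apply Hall's marriage theorem.
  let copies (i : ι) : Finset (Σ _ : β, ℕ) := (t i).sigma fun b => Finset.range (k b)
  have hcopies : ∀ s : Finset ι, s.card ≤ (s.biUnion copies).card := by
    intro s
    have hbiUnion : s.biUnion copies = (s.biUnion t).sigma fun b => Finset.range (k b) := by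
      ext ⟨b, n⟩
      simp [copies, and_assoc, ← exists_and_right]
    simpa [hbiUnion] using hall s
  obtain ⟨g, hginj, hg⟩ :=
    (Finset.all_card_le_biUnion_card_iff_exists_injective copies).mp hcopies
  have hg' (i : ι) : (g i).1 ∈ t i ∧ (g i).2 < k (g i).1 := by
    simpa [copies] using hg i
  refine ⟨fun i => (g i).1, fun i => (hg' i).1, fun b => ?_⟩
  rw [← Finset.card_range (k b)]
  refine Finset.card_le_card_of_injOn (fun i => (g i).2) (fun i hi => ?_) fun i hi j hj hij => ?_
  · obtain rfl : (g i).1 = b := by simpa using hi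
    simpa using (hg' i).2
  · have hfst : (g i).1 = (g j).1 := by
      simp only [Finset.coe_filter_univ, Set.mem_ofPred_eq] at hi hj
      exact hi.trans hj.symm
    exact hginj (Sigma.ext hfst (heq_of_eq hij))

omit [DecidableEq V] [DecidableEq α] in
lemma exists_mem_forall_notMem_clause {ι : Type*} (C : ι → Clause D) (v : V) {A : Finset ι}
    {E : Finset α} (h : A.card < E.card) : ∃ ε ∈ E, ∀ i ∈ A, (v, ε) ∉ (C i).1 := by
  by_contra! hcover
  refine h.not_ge <|
    Finset.card_le_card_of_forall_subsingleton (fun ε i => (v, ε) ∈ (C i).1) hcover ?_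
  rintro i - ε ⟨-, hε⟩ ε' ⟨-, hε'⟩
  exact congrArg Prod.snd ((C i).2.2 _ hε _ hε' rfl)

/-- The number of clauses that the variables in `W` can be made to satisfy, whatever literals are
involved, if each `v ∈ W` takes a value in `E v`: a variable with `k` admissible values can avoid
any `k - 1` of them.  Truncated subtraction gives `0` where `E v = ∅`. -/
def capacity (E : V → Finset α) (W : Finset V) : ℕ := ∑ v ∈ W, ((E v).card - 1)

/-- The partial assignment with domain `W` and values `f`. -/
def assignOn (W : Finset V) (f : W → α) (hf : ∀ v : W, f v ∈ D v) : PAssign D :=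
  ⟨W.attach.image fun v => (v.1, f v), by grind, by grind⟩

lemma mem_assignOn {W : Finset V} {f : W → α} {hf : ∀ v : W, f v ∈ D v} {p : V × α} :
    p ∈ (assignOn W f hf).1 ↔ ∃ v : W, (v.1, f v) = p := by
  simp [assignOn]

lemma vars_assignOn {W : Finset V} {f : W → α} (hf : ∀ v : W, f v ∈ D v) :
    FinFn.vars (assignOn W f hf) = W := by
  ext v
  simp [mem_vars, mem_assignOn]

theorem exists_satClause_of_card_le_capacity {W : Finset V} {E : V → Finset α}
    (hED : ∀ v ∈ W, E v ⊆ D v) (hE : ∀ v ∈ W, (E v).Nonempty) {T : Multiset (Clause D)}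
    (hall : ∀ H ≤ T, Multiset.card H ≤ capacity E (W ∩ mvars H)) :
    ∃ φ : PAssign D, FinFn.vars φ = W ∧ (∀ p ∈ φ.1, p.2 ∈ E p.1) ∧ ∀ C ∈ T, SatClause φ C := by
  have hall_occurrences : ∀ s : Finset T,
      s.card ≤ ∑ v ∈ s.biUnion fun i => W ∩ FinFn.vars i.1, ((E v).card - 1) := by
    intro s
    have hle : s.val.map (fun i : T => i.1) ≤ T := by
      simpa using Multiset.map_le_map (f := fun i : T => i.1)
        (Finset.val_le_iff.mpr s.subset_univ)
    have hvars : s.biUnion (fun i : T => W ∩ FinFn.vars i.1) =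
        W ∩ mvars (s.val.map fun i : T => i.1) := by
      ext v
      simp only [Finset.mem_biUnion, Finset.mem_inter, mem_mvars, Multiset.mem_map,
        Finset.mem_val]
      grind
    simpa [hvars, capacity] using hall _ hle
  obtain ⟨m, hm, hfiber⟩ := exists_choice_card_fiber_le_of_hall _ _ hall_occurrences
  have hvalue : ∀ v : W, ∃ ε ∈ E v, ∀ i : T, m i = v → (v.1, ε) ∉ i.1.1 := by
    intro v
    have hlt : (Finset.univ.filter fun i : T => m i = v).card < (E v).card :=
      (hfiber v).trans_lt (Nat.sub_one_lt (hE v v.2).card_ne_zero)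
    simpa using exists_mem_forall_notMem_clause (fun i : T => i.1) v.1 hlt
  choose f hf hfm using hvalue
  refine ⟨assignOn W f fun v => hED v v.2 (hf v), vars_assignOn _, ?_, fun C hC => ?_⟩
  · intro p hp
    obtain ⟨v, rfl⟩ := mem_assignOn.mp hp
    exact hf v
  · obtain ⟨i, rfl⟩ : ∃ i : T, i.1 = C := ⟨⟨C, 0, Multiset.count_pos.mpr hC⟩, rfl⟩
    obtain ⟨hW, hvC⟩ := Finset.mem_inter.mp (hm i)
    obtain ⟨ε, hε⟩ := mem_vars.mp hvC
    refine ⟨_, hε, f ⟨m i, hW⟩, mem_assignOn.mpr ⟨⟨m i, hW⟩, rfl⟩, ?_⟩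
    rintro rfl
    exact hfm ⟨m i, hW⟩ i rfl hε

end Hall

section Surplus

/-- `W` witnesses that the surplus of `F` is at most one: it is non-empty and, for `W ⊆ var(F)`,
the inequality says `δ(F[W]) ≤ 1`. -/
def WitnessesSurplusLeOne (F : Multiset (Clause D)) (W : Finset V) : Prop :=
  W.Nonempty ∧ Multiset.card (touchedBy F W) ≤ capacity D W + 1

variable {F : Multiset (Clause D)} {W : Finset V}

lemma witnessesSurplusLeOne_mvars (hδ : delta F = 1) (hn : (mvars F).Nonempty) :
    WitnessesSurplusLeOne F (mvars F) := by
  have hcast : (capacity D (mvars F) : ℤ) = ∑ v ∈ mvars F, ((D v).card - 1 : ℤ) := by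
    rw [capacity, Nat.cast_sum]
    exact Finset.sum_congr rfl fun v hv =>
      Nat.cast_pred (domain_nonempty_of_mem_mvars hv).card_pos
  have hcard : Multiset.card F = capacity D (mvars F) + 1 := by
    rw [delta, ← hcast] at hδ
    omega
  exact ⟨hn, hcard ▸ Multiset.card_le_card (Multiset.filter_le _ _)⟩

lemma card_touchedBy_sdiff_add_card_le {H : Multiset (Clause D)} (hH : H ≤ touchedBy F W) :
    Multiset.card (touchedBy F (W \ mvars H)) + Multiset.card H ≤
      Multiset.card (touchedBy F W) := by
  let touches (C : Clause D) : Prop := (FinFn.vars C ∩ (W \ mvars H)).Nonempty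
  have hU : touchedBy F (W \ mvars H) ≤ (touchedBy F W).filter touches :=
    Multiset.le_filter.mpr
      ⟨touchedBy_mono F Finset.sdiff_subset, fun _ hC => (mem_touchedBy.mp hC).2⟩
  have hH' : H ≤ (touchedBy F W).filter fun C => ¬ touches C := by
    refine Multiset.le_filter.mpr ⟨hH, ?_⟩
    rintro C hC ⟨v, hv⟩
    obtain ⟨hvC, hvU⟩ := Finset.mem_inter.mp hv
    exact (Finset.mem_sdiff.mp hvU).2 (mem_mvars.mpr ⟨C, hC, hvC⟩)
  calc Multiset.card (touchedBy F (W \ mvars H)) + Multiset.card H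
      ≤ Multiset.card ((touchedBy F W).filter touches) +
          Multiset.card ((touchedBy F W).filter fun C => ¬ touches C) :=
        add_le_add (Multiset.card_le_card hU) (Multiset.card_le_card hH')
    _ = Multiset.card (touchedBy F W) := by
        rw [← Multiset.card_add, Multiset.filter_add_not]

lemma card_lt_capacity_of_minimal (hW : Minimal (WitnessesSurplusLeOne F) W)
    {H : Multiset (Clause D)} (hH : H ≤ touchedBy F W) (hH0 : H ≠ 0)
    (hH2 : Multiset.card H + 2 ≤ Multiset.card (touchedBy F W)) :
    Multiset.card H < capacity D (W ∩ mvars H) := by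
  have hcard := card_touchedBy_sdiff_add_card_le hH
  have hsplit : capacity D (W ∩ mvars H) + capacity D (W \ mvars H) = capacity D W :=
    Finset.sum_inter_add_sum_sdiff W (mvars H) _
  have hWcard := hW.prop.2
  obtain hempty | hne := (W \ mvars H).eq_empty_or_nonempty
  · have hzero : capacity D (W \ mvars H) = 0 := by simp [hempty, capacity]
    omega
  · have hproper : W \ mvars H ⊂ W := by
      refine Finset.sdiff_subset.ssubset_of_ne fun heq => ?_
      have := Multiset.card_pos.mpr hH0
      rw [heq] at hcard
      omega
    have hsurplus : ¬ WitnessesSurplusLeOne F (W \ mvars H) := hW.not_prop_of_lt hproper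
    have hlarge : capacity D (W \ mvars H) + 1 < Multiset.card (touchedBy F (W \ mvars H)) :=
      not_le.mp fun h => hsurplus ⟨hne, h⟩
    omega

omit [DecidableEq α] in
lemma card_touchedBy_le_one_of_minimal (hW : Minimal (WitnessesSurplusLeOne F) W) {v : V}
    (hv : v ∈ W) (hDv : (D v).card ≤ 1) : Multiset.card (touchedBy F W) ≤ 1 := by
  have hcapacity : capacity D (W.erase v) = capacity D W := by
    refine Finset.sum_erase W ?_
    omega
  have hWcard := hW.prop.2
  have herase : W.erase v = ∅ := by
    by_contra hne
    refine hW.not_prop_of_lt (Finset.erase_ssubset hv)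
      ⟨Finset.nonempty_iff_ne_empty.mpr hne, ?_⟩
    rw [hcapacity]
    exact (Multiset.card_le_card (touchedBy_mono F (Finset.erase_subset v W))).trans hWcard
  rw [← hcapacity, herase] at hWcard
  simpa [capacity] using hWcard

lemma capacity_le_capacity_update_erase_add_one (E : V → Finset α) (W : Finset V) (v : V) (ε : α) :
    capacity E W ≤ capacity (Function.update E v ((E v).erase ε)) W + 1 := by
  have hterm (w : V) : (E w).card - 1 ≤
      ((Function.update E v ((E v).erase ε) w).card - 1) + if w = v then 1 else 0 := by
    obtain rfl | hne := eq_or_ne w v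
    · have := Finset.pred_card_le_card_erase (s := E w) (a := ε)
      simp only [Function.update_self, if_true]
      omega
    · simp [hne]
  calc capacity E W
      ≤ capacity (Function.update E v ((E v).erase ε)) W + ∑ w ∈ W, if w = v then 1 else 0 := by
        simpa only [capacity, Finset.sum_add_distrib] using Finset.sum_le_sum fun w _ => hterm w
    _ ≤ capacity (Function.update E v ((E v).erase ε)) W + 1 := by
        rw [Finset.sum_ite_eq']
        split_ifs <;> omega

lemma card_le_capacity_update_erase_of_minimal (hW : Minimal (WitnessesSurplusLeOne F) W)
    {v : V} {ε : α} (htwice : 1 < litCount (touchedBy F W) (v, ε)) {H : Multiset (Clause D)}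
    (hH : H ≤ (touchedBy F W).filter fun C => (v, ε) ∉ C.1) :
    Multiset.card H ≤ capacity (Function.update D v ((D v).erase ε)) (W ∩ mvars H) := by
  obtain rfl | hH0 := eq_or_ne H 0
  · simp
  have hH2 : Multiset.card H + 2 ≤ Multiset.card (touchedBy F W) := by
    have hsplit := congrArg Multiset.card
      (Multiset.filter_add_not (fun C : Clause D => (v, ε) ∈ C.1) (touchedBy F W))
    have hcard := Multiset.card_le_card hH
    rw [Multiset.card_add] at hsplit
    unfold litCount at htwice
    omega
  have hlt := card_lt_capacity_of_minimal hW (hH.trans (Multiset.filter_le _ _)) hH0 hH2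
  have hupdate := capacity_le_capacity_update_erase_add_one D (W ∩ mvars H) v ε
  omega

theorem IsLean.litCount_le_one_of_minimal (hF : IsLean F) (hWF : W ⊆ mvars F)
    (hW : Minimal (WitnessesSurplusLeOne F) W) {v : V} (hv : v ∈ W) (ε : α) :
    litCount F (v, ε) ≤ 1 := by
  rw [← litCount_touchedBy F hv ε]
  obtain hDv | hDv := le_or_gt (D v).card 1
  · exact (Multiset.card_le_card (Multiset.filter_le _ _)).trans
      (card_touchedBy_le_one_of_minimal hW hv hDv)
  by_contra! htwice
  have hsub : ∀ w, Function.update D v ((D v).erase ε) w ⊆ D w :=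
    update_le_self_iff.mpr (Finset.erase_subset ε (D v))
  have hne : ∀ w ∈ W, (Function.update D v ((D v).erase ε) w).Nonempty := by
    intro w hw
    obtain rfl | hwv := eq_or_ne w v
    · simpa using Finset.Nontrivial.erase_nonempty (Finset.one_lt_card_iff_nontrivial.mp hDv)
    · simpa [hwv] using domain_nonempty_of_mem_mvars (hWF hw)
  obtain ⟨φ, hφW, hφE, hφsat⟩ := exists_satClause_of_card_le_capacity (fun w _ => hsub w) hne
    fun H hH => card_le_capacity_update_erase_of_minimal hW htwice hH
  refine hF ⟨φ, fun C hC htouched => ?_, v, by simp [hφW, hv, hWF hv]⟩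
  by_cases hl : (v, ε) ∈ C.1
  · obtain ⟨ε', hε'⟩ := mem_vars.mp (hφW ▸ hv)
    have hmem : ε' ∈ (D v).erase ε := by simpa using hφE _ hε'
    exact ⟨_, hl, ε', hε', Finset.ne_of_mem_erase hmem⟩
  · exact hφsat C (Multiset.mem_filter.mpr ⟨mem_touchedBy.mpr ⟨hC, hφW ▸ htouched⟩, hl⟩)

end Surplus

theorem exists_singular_variable_of_deficiency_one_general (F : Multiset (Clause D))
    (hF : IsLean F) (hδ : delta F = 1) (hn : (mvars F).Nonempty) :
    ∃ v ∈ mvars F, ∀ ε ∈ D v, litCount F (v, ε) = 1 := by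
  obtain ⟨W, hWF, hW⟩ := exists_minimal_le_of_wellFoundedLT (WitnessesSurplusLeOne F) _
    (witnessesSurplusLeOne_mvars hδ hn)
  obtain ⟨v, hv⟩ := hW.prop.1
  refine ⟨v, hWF hv, fun ε hε => le_antisymm ?_ ?_⟩
  · exact hF.litCount_le_one_of_minimal hWF hW hv ε
  · exact hF.litCount_pos (hWF hv) hε

/-- every minimally unsatisfiable generalised clause-set of
deficiency `1` with at least one variable has a variable `v` all of whose values
occur in exactly one clause. -/
theorem exists_singular_variable_of_deficiency_one
    (hD : ∀ v, (D v).Nonempty) (F : Finset (Clause D))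
    (hmu : MinUnsat F) (hδ : delta F.val = 1) (hn : (mvars F.val).Nonempty) :
    ∃ v ∈ mvars F.val, ∀ ε ∈ D v, litCount F.val (v, ε) = 1 :=
  exists_singular_variable_of_deficiency_one_general F.val hmu.isLean hδ hn

end GCLS
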